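/- Let M be a cancellative commutative monoid, N a submonoid, b ∈ N, and ℓ ∈ ℕ such that Z_{N,ℓ}(b) is infinite (a fixed-slice FFM obstruction). Then there exists an undermonoid W of M containing N such that Z_{W,ℓ}(b) is infinite (an undermonoid fixed-slice obstruction with the same b and ℓ). -/

import Mathlib

/-- The set of factorizations of `b` in the submonoid `S`. -/
def ZSet {M : Type*} [CancelCommMonoid M] (S : Submonoid M) (b : S) :
    Set (Multiset (Associates S)) :=
  {z | (∀ a ∈ z, Irreducible a) ∧ z.prod = Associates.mk b}

/-- The set of length-`ℓ` factorizations of `b` in `S`. -/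
def ZSetLen {M : Type*} [CancelCommMonoid M] (S : Submonoid M) (b : S) (ℓ : ℕ) :
    Set (Multiset (Associates S)) :=
  {z ∈ ZSet S b | Multiset.card z = ℓ}

/-- A submonoid `N` of `M` is an undermonoid if every `m ∈ M` satisfies
`m * x = y` for some `x, y ∈ N`. -/
def IsUndermonoid {M : Type*} [CancelCommMonoid M] (N : Submonoid M) : Prop :=
  ∀ m : M, ∃ x ∈ N, ∃ y ∈ N, m * x = y

/-!
Call `W ≥ N` divisor-preserving at `b` if every divisor of `b` in `W` already lies in `N`. Such a
`W` has the same units as `N` and the same irreducible divisors of `b`, so factorizations of `b` in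
`N` inject into those in `W`. By Zorn's lemma there is a maximal such `W`. If `m ∉ W`, maximality
yields `w * m ^ j = b` with `w ∈ W` and `0 < j`. If also `m * (w * b) ∉ W`, then likewise
`w' * (m * (w * b)) ^ i = b` with `w' ∈ W` and `0 < i`, and eliminating `m` shows
`b ^ (j + 1) ∣ b ^ j` in `W`. So `b` would be a unit, and then it would have only the empty
factorization. Hence `m * (w * b) ∈ W`, and `W` is an undermonoid.
-/

section CommMonoid

variable {A B : Type*} [CommMonoid A] [CommMonoid B]

theorem associates_irreducible_mk {x : A} : Irreducible (Associates.mk x) ↔ Irreducible x := by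
  refine ⟨fun hx ↦ ?_, fun hx ↦ ⟨fun h ↦ hx.not_isUnit (Associates.isUnit_mk.1 h), ?_⟩⟩
  · have : IsLocalHom (Associates.mkMonoidHom (M := A)) := ⟨fun _ ↦ Associates.isUnit_mk.1⟩
    exact Irreducible.of_map (f := Associates.mkMonoidHom) hx
  · simp only [Associates.forall_associated, Associates.mk_mul_mk, Associates.isUnit_mk]
    intro u v huv
    exact ((Associates.mk_eq_mk_iff_associated.1 huv).irreducible hx).isUnit_or_isUnit rfl

/-- The homomorphism induced by `φ` on classes of associated elements; it transports
factorizations along `φ`. -/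
def associatesMap (φ : A →* B) : Associates A →* Associates B where
  toFun := Quotient.map φ fun _ _ h ↦ h.map φ
  map_one' := congrArg Associates.mk (map_one φ)
  map_mul' := by
    rintro ⟨x⟩ ⟨y⟩
    exact congrArg Associates.mk (map_mul φ x y)

theorem associatesMap_mk (φ : A →* B) (x : A) :
    associatesMap φ (Associates.mk x) = Associates.mk (φ x) :=
  rfl

theorem associatesMap_injective {φ : A →* B}
    (hφ : ∀ x y, Associated (φ x) (φ y) → Associated x y) :
    Function.Injective (associatesMap φ) := by
  simpa only [Function.Injective, Associates.forall_associated, associatesMap_mk,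
    Associates.mk_eq_mk_iff_associated] using hφ

theorem pow_eq_of_mul_pow_eq {m w w' b : A} {i j : ℕ} (hw : w * m ^ (j + 1) = b)
    (hw' : w' * (m * (w * b)) ^ (i + 1) = b) :
    b ^ (j + 1) = w' ^ (j + 1) * (b ^ (j + 2) * w ^ j) ^ (i + 1) := by
  have hpow : (m * (w * b)) ^ (j + 1) = b ^ (j + 2) * w ^ j :=
    calc (m * (w * b)) ^ (j + 1) = w * m ^ (j + 1) * (w ^ j * b ^ (j + 1)) := by
          rw [mul_pow, mul_pow, pow_succ' w]
          ac_rfl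
      _ = b ^ (j + 2) * w ^ j := by
          rw [hw, pow_succ' b (j + 1)]
          ac_rfl
  calc b ^ (j + 1) = (w' * (m * (w * b)) ^ (i + 1)) ^ (j + 1) := by rw [hw']
    _ = w' ^ (j + 1) * (b ^ (j + 2) * w ^ j) ^ (i + 1) := by rw [mul_pow, pow_right_comm, hpow]

end CommMonoid

theorem isUnit_of_pow_succ_dvd_pow {A : Type*} [CommMonoid A] [IsLeftCancelMul A] {b : A}
    {n : ℕ} (h : b ^ (n + 1) ∣ b ^ n) : IsUnit b := by
  obtain ⟨c, hc⟩ := h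
  rw [pow_succ, mul_assoc, left_eq_mul] at hc
  exact .of_mul_eq_one c hc

/-- `W` extends `N` without creating new divisors of `b`: whenever `b` is a product of two elements
of `W`, both lie in `N`. By commutativity it is enough to ask this of one of the two factors. -/
structure PreservesDivisors {M : Type*} [CommMonoid M] (b : M) (N W : Submonoid M) : Prop where
  le : N ≤ W
  mem_of_mul_eq : ∀ u ∈ W, ∀ v ∈ W, u * v = b → u ∈ N

namespace PreservesDivisors

section CommMonoid

variable {M : Type*} [CommMonoid M] {b m : M} {N W : Submonoid M}

theorem refl (b : M) (N : Submonoid M) : PreservesDivisors b N N :=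
  ⟨le_rfl, fun _ hu _ _ _ ↦ hu⟩

theorem sSup_of_directedOn {c : Set (Submonoid M)} (hne : c.Nonempty) (hdir : DirectedOn (· ≤ ·) c)
    (hc : ∀ W ∈ c, PreservesDivisors b N W) : PreservesDivisors b N (sSup c) := by
  obtain ⟨W₀, hW₀⟩ := hne
  refine ⟨(hc W₀ hW₀).le.trans (le_sSup hW₀), fun u hu v hv huv ↦ ?_⟩
  rw [Submonoid.mem_sSup_of_directedOn ⟨W₀, hW₀⟩ hdir] at hu hv
  obtain ⟨U, hU, huU⟩ := hu
  obtain ⟨V, hV, hvV⟩ := hv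
  obtain ⟨W, hW, hUW, hVW⟩ := hdir U hU V hV
  exact (hc W hW).mem_of_mul_eq u (hUW huU) v (hVW hvV) huv

theorem exists_maximal (b : M) (N : Submonoid M) : ∃ W, Maximal (PreservesDivisors b N) W := by
  obtain ⟨W, -, hW⟩ := zorn_le_nonempty₀ {W | PreservesDivisors b N W}
    (fun c hc hchain W₀ hW₀ ↦
      ⟨_, sSup_of_directedOn ⟨W₀, hW₀⟩ hchain.directedOn hc, fun _ ↦ le_sSup⟩) N (refl b N)
  exact ⟨W, hW⟩

theorem sup_powers (h : PreservesDivisors b N W)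
    (hm : ∀ w ∈ W, ∀ j, w * m ^ (j + 1) ≠ b) :
    PreservesDivisors b N (W ⊔ Submonoid.powers m) := by
  refine ⟨h.le.trans le_sup_left, fun u hu v hv huv ↦ ?_⟩
  obtain ⟨w, hw, _, ⟨i, rfl⟩, rfl⟩ := Submonoid.mem_sup.1 hu
  obtain ⟨w', hw', _, ⟨j, rfl⟩, rfl⟩ := Submonoid.mem_sup.1 hv
  have hprod : w * w' * m ^ (i + j) = b := by
    rw [← huv, pow_add]
    exact mul_mul_mul_comm ..
  obtain ⟨rfl, rfl⟩ : i = 0 ∧ j = 0 := by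
    rw [← Nat.add_eq_zero_iff]
    by_contra hij
    obtain ⟨k, hk⟩ := Nat.exists_eq_add_one_of_ne_zero hij
    exact hm _ (W.mul_mem hw hw') k (hk ▸ hprod)
  simp only [pow_zero, mul_one] at huv ⊢
  exact h.mem_of_mul_eq w hw w' hw' huv

theorem exists_mul_pow_eq_of_notMem (hW : Maximal (PreservesDivisors b N) W) (hm : m ∉ W) :
    ∃ w ∈ W, ∃ j, w * m ^ (j + 1) = b := by
  contrapose! hm
  exact hW.le_of_ge (hW.prop.sup_powers hm) le_sup_left
    (Submonoid.mem_sup_right (Submonoid.mem_powers m))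

theorem mem_of_isUnit (h : PreservesDivisors b N W) (hb : b ∈ N) {u : W} (hu : IsUnit u) :
    (u : M) ∈ N := by
  obtain ⟨v, huv⟩ := hu.exists_right_inv
  have huvb : (u : M) * (v * b) = b := by
    rw [← mul_assoc, ← Submonoid.coe_mul, huv, Submonoid.coe_one, one_mul]
  exact h.mem_of_mul_eq u u.2 (v * b) (W.mul_mem v.2 (h.le hb)) huvb

theorem isLocalHom_inclusion (h : PreservesDivisors b N W) (hb : b ∈ N) :
    IsLocalHom (Submonoid.inclusion h.le) where
  map_nonunit x hx := by
    obtain ⟨y, hxy⟩ := hx.exists_right_inv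
    have hy : (y : M) ∈ N := h.mem_of_isUnit hb (.of_mul_eq_one_right _ hxy)
    exact .of_mul_eq_one ⟨y, hy⟩ (Subtype.ext (Subtype.ext_iff.1 hxy :))

theorem associated_of_associated_inclusion (h : PreservesDivisors b N W) (hb : b ∈ N) {x y : N}
    (hxy : Associated (Submonoid.inclusion h.le x) (Submonoid.inclusion h.le y)) :
    Associated x y := by
  obtain ⟨u, hu⟩ := hxy
  have := h.isLocalHom_inclusion hb
  have huN : IsUnit (⟨u, h.mem_of_isUnit hb u.isUnit⟩ : N) :=
    isUnit_of_map_unit (Submonoid.inclusion h.le) _ u.isUnit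
  exact ⟨huN.unit, Subtype.ext (Subtype.ext_iff.1 hu :)⟩

theorem irreducible_inclusion (h : PreservesDivisors b N W) (hb : b ∈ N) {x : N}
    (hx : Irreducible x) (hxb : x ∣ ⟨b, hb⟩) : Irreducible (Submonoid.inclusion h.le x) := by
  have := h.isLocalHom_inclusion hb
  obtain ⟨c, hc⟩ := hxb
  have mem_of_mul_eq_x (u v : W) (huv : (x : M) = u * v) : (u : M) ∈ N := by
    refine h.mem_of_mul_eq u u.2 (v * c) (W.mul_mem v.2 (h.le c.2)) ?_
    rw [← mul_assoc, ← huv]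
    exact congrArg Subtype.val hc.symm
  refine ⟨fun hunit ↦ hx.not_isUnit (isUnit_of_map_unit _ _ hunit), fun u v huv ↦ ?_⟩
  have huvM : (x : M) = u * v := congrArg Subtype.val huv
  have hu : (u : M) ∈ N := mem_of_mul_eq_x u v huvM
  have hv : (v : M) ∈ N := mem_of_mul_eq_x v u (huvM.trans (mul_comm ..))
  exact (hx.isUnit_or_isUnit (a := ⟨u, hu⟩) (b := ⟨v, hv⟩) (Subtype.ext huvM)).imp
    (.map (Submonoid.inclusion h.le)) (.map (Submonoid.inclusion h.le))

end CommMonoid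

section CancelCommMonoid

variable {M : Type*} [CancelCommMonoid M] {b : M} {N W : Submonoid M}

theorem isUndermonoid_of_maximal (hW : Maximal (PreservesDivisors b N) W) (hb : b ∈ N)
    (hunit : ¬IsUnit (⟨b, hb⟩ : N)) : IsUndermonoid W := by
  intro m
  by_cases hm : m ∈ W
  · exact ⟨1, W.one_mem, m, hm, mul_one m⟩
  obtain ⟨w, hw, j, hwj⟩ := exists_mul_pow_eq_of_notMem hW hm
  have hbW : b ∈ W := hW.prop.le hb
  refine ⟨w * b, W.mul_mem hw hbW, m * (w * b), ?_, rfl⟩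
  by_contra hmwb
  obtain ⟨w', hw', i, hwi⟩ := exists_mul_pow_eq_of_notMem hW hmwb
  lift w to W using hw
  lift w' to W using hw'
  have hpow : (⟨b, hbW⟩ : W) ^ (j + 1) = w' ^ (j + 1) * (⟨b, hbW⟩ ^ (j + 2) * w ^ j) ^ (i + 1) :=
    Subtype.ext (pow_eq_of_mul_pow_eq hwj hwi)
  have hdvd : (⟨b, hbW⟩ : W) ^ (j + 2) ∣ ⟨b, hbW⟩ ^ (j + 1) := by
    rw [hpow]
    exact ((dvd_mul_right _ _).trans (dvd_pow_self _ i.succ_ne_zero)).mul_left _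
  have := hW.prop.isLocalHom_inclusion hb
  exact hunit (isUnit_of_map_unit (Submonoid.inclusion hW.prop.le) _
    (isUnit_of_pow_succ_dvd_pow hdvd))

theorem map_mem_zSetLen (h : PreservesDivisors b N W) (hb : b ∈ N) {ℓ : ℕ}
    {z : Multiset (Associates N)} (hz : z ∈ ZSetLen N ⟨b, hb⟩ ℓ) :
    z.map (associatesMap (Submonoid.inclusion h.le)) ∈ ZSetLen W ⟨b, h.le hb⟩ ℓ := by
  obtain ⟨⟨hirr, hprod⟩, hcard⟩ := hz
  refine ⟨⟨fun a' ha' ↦ ?_, ?_⟩, (Multiset.card_map _ _).trans hcard⟩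
  · obtain ⟨a, ha, rfl⟩ := Multiset.mem_map.1 ha'
    obtain ⟨x, rfl⟩ := Associates.mk_surjective a
    have hxb : x ∣ ⟨b, hb⟩ := Associates.mk_dvd_mk.1 (hprod ▸ Multiset.dvd_prod ha)
    rw [associatesMap_mk, associates_irreducible_mk]
    exact h.irreducible_inclusion hb (associates_irreducible_mk.1 (hirr _ ha)) hxb
  · rw [← map_multiset_prod, hprod, associatesMap_mk]
    rfl

theorem zSetLen_infinite (h : PreservesDivisors b N W) (hb : b ∈ N) {ℓ : ℕ}
    (hinf : (ZSetLen N ⟨b, hb⟩ ℓ).Infinite) : (ZSetLen W ⟨b, h.le hb⟩ ℓ).Infinite :=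
  Set.infinite_of_injOn_mapsTo
    (Multiset.map_injective (associatesMap_injective fun _ _ ↦
      h.associated_of_associated_inclusion hb)).injOn
    (fun _ ↦ h.map_mem_zSetLen hb) hinf

end CancelCommMonoid

end PreservesDivisors

theorem eq_zero_of_mem_zSet_of_isUnit {M : Type*} [CancelCommMonoid M] {S : Submonoid M} {b : S}
    (hb : IsUnit b) {z : Multiset (Associates S)} (hz : z ∈ ZSet S b) : z = 0 := by
  obtain ⟨hirr, hprod⟩ := hz
  refine Multiset.eq_zero_of_forall_notMem fun a ha ↦ (hirr a ha).not_isUnit ?_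
  exact isUnit_of_dvd_unit (hprod ▸ Multiset.dvd_prod ha) (Associates.isUnit_mk.2 hb)

theorem not_isUnit_of_zSetLen_infinite {M : Type*} [CancelCommMonoid M] {S : Submonoid M} {b : S}
    {ℓ : ℕ} (hinf : (ZSetLen S b ℓ).Infinite) : ¬IsUnit b := fun hb ↦
  hinf ((Set.finite_singleton 0).subset fun _ hz ↦ eq_zero_of_mem_zSet_of_isUnit hb hz.1)

/-- Local obstruction theorem: a fixed-slice FFM obstruction `(N, b, ℓ)` in `M`
produces an undermonoid fixed-slice obstruction `(W, b, ℓ)` with the same `b`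
and `ℓ`. -/
theorem local_obstruction (M : Type*) [CancelCommMonoid M] (N : Submonoid M)
    (b : M) (hb : b ∈ N) (ℓ : ℕ) (hinf : (ZSetLen N ⟨b, hb⟩ ℓ).Infinite) :
    ∃ W : Submonoid M, N ≤ W ∧ IsUndermonoid W ∧
      ∃ hbW : b ∈ W, (ZSetLen W ⟨b, hbW⟩ ℓ).Infinite := by
  obtain ⟨W, hW⟩ := PreservesDivisors.exists_maximal b N
  exact ⟨W, hW.prop.le,
    PreservesDivisors.isUndermonoid_of_maximal hW hb (not_isUnit_of_zSetLen_infinite hinf),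
    hW.prop.le hb, hW.prop.zSetLen_infinite hb hinf⟩
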